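/- arXiv:2212.13188 — 3 statements merged into one kernel-verified Lean document; each statement's English description precedes it below -/
import Mathlib

section
/- For every b ∈ {0,1}^N, the set of fixpoints {p ∈ [0,l] : p = F_b(p)} is nonempty and contains a minimal element and a maximal element with respect to the componentwise order. -/
open Matrix

/-!
All maps involved are monotone for the componentwise order. Writing `G u` for the equity map at
the payments `u`, the equity `H u` is the least fixpoint of `G u`; if `u ≤ v ≤ l` then
`G u (H v) ≤ G v (H v) = H v`, so Knaster–Tarski produces a fixpoint of `G u` below `H v`, and
therefore `H u ≤ H v`. Hence each payment map `F b` is a monotone self-map of the box `[0, l]`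
(for `b i = true` because liquidation values never exceed asset values, so leaving default only
raises the payment), and Knaster–Tarski applies once more.
-/

open Set Function

section KnasterTarski

variable {L : Type*} [ConditionallyCompleteLattice L] {a b c : L} {f : L → L}

theorem exists_isLeast_and_isGreatest_fixedPoints_Icc (hab : a ≤ b)
    (hmaps : MapsTo f (Icc a b) (Icc a b)) (hmono : MonotoneOn f (Icc a b)) :
    (∃ p, IsLeast (Icc a b ∩ fixedPoints f) p) ∧
      ∃ p, IsGreatest (Icc a b ∩ fixedPoints f) p := by
  have : Fact (a ≤ b) := ⟨hab⟩
  let g : Icc a b →o Icc a b := ⟨hmaps.restrict, fun x y hxy => hmono x.2 y.2 hxy⟩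
  have coe_fixed {p : Icc a b} (hp : g p = p) : (p : L) ∈ Icc a b ∩ fixedPoints f :=
    ⟨p.2, congrArg Subtype.val hp⟩
  have lift_fixed {q : L} (hq : q ∈ Icc a b ∩ fixedPoints f) : g ⟨q, hq.1⟩ = ⟨q, hq.1⟩ :=
    Subtype.ext hq.2
  exact ⟨⟨g.lfp, coe_fixed g.map_lfp, fun _ hq => g.lfp_le_fixed (lift_fixed hq)⟩,
    ⟨g.gfp, coe_fixed g.map_gfp, fun _ hq => g.le_gfp (lift_fixed hq).ge⟩⟩

theorem le_of_isLeast_fixedPoints_of_map_le (ha : IsLeast (fixedPoints f) a) (hmono : Monotone f)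
    (hc : ∀ z, c ≤ f z) (hb : f b ≤ b) : a ≤ b := by
  have hmaps : MapsTo f (Icc c b) (Icc c b) := fun z hz => ⟨hc z, (hmono hz.2).trans hb⟩
  obtain ⟨⟨p, ⟨hp, hpf⟩, -⟩, -⟩ :=
    exists_isLeast_and_isGreatest_fixedPoints_Icc ((hc b).trans hb) hmaps (hmono.monotoneOn _)
  exact (ha.2 hpf).trans hp.2

end KnasterTarski

section Scalar

variable {R : Type*} [Ring R] [LinearOrder R]

/-- A component of `G₊`: the equity of a firm with asset value `x` and liability `l` that pays
`u`. A firm that does not pay its liability in full has no equity. -/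
def surplus (x l u : R) : R :=
  max (x - l) 0 * (if u = l then 1 else 0)

/-- A component of `Φ_b`: the payment of a firm with asset value `x`, liquidation value `y` and
liability `l`. For `b = false` it is `y ∧ l`; for `b = true` the firm pays `y` if it is in
default, that is `x < l`, and `l` otherwise. -/
def payment (b : Bool) (x y l : R) : R :=
  let d : R := if x < l then 1 else 0
  if b then y * d + l * (1 - d) else min y l

variable {b : Bool} {x x' y y' l u u' : R}

theorem payment_false : payment false x y l = min y l := rfl

theorem payment_true : payment true x y l = if x < l then y else l := by
  split_ifs with h <;> simp [payment, h]

theorem payment_le (hyx : y ≤ x) : payment b x y l ≤ l := by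
  cases b
  · exact payment_false.trans_le (min_le_right y l)
  · rw [payment_true]
    split_ifs with h
    · exact hyx.trans h.le
    · exact le_rfl

theorem payment_nonneg (hy : 0 ≤ y) (hl : 0 ≤ l) : 0 ≤ payment b x y l := by
  cases b
  · exact (le_min hy hl).trans_eq payment_false.symm
  · rw [payment_true]
    split_ifs
    exacts [hy, hl]

theorem payment_le_payment (hx : x ≤ x') (hy : y ≤ y') (hyx : y ≤ x) :
    payment b x y l ≤ payment b x' y' l := by
  cases b
  · exact min_le_min_right l hy
  · by_cases h : x' < l
    · rwa [payment_true, payment_true, if_pos h, if_pos (hx.trans_lt h)]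
    · exact (payment_le hyx).trans_eq (payment_true.trans (if_neg h)).symm

variable [IsOrderedRing R]

theorem surplus_nonneg : 0 ≤ surplus x l u :=
  mul_nonneg (le_max_right _ _) (by split_ifs <;> simp)

theorem surplus_le_surplus (hx : x ≤ x') (hu : u ≤ u') (hul : u' ≤ l) :
    surplus x l u ≤ surplus x' l u' := by
  by_cases h : u = l
  · have h' : u' = l := hul.antisymm (h ▸ hu)
    simpa only [surplus, h, h', if_true, mul_one] using max_le_max_right 0 (sub_le_sub_right hx l)
  · simpa only [surplus, h, if_false, mul_zero] using surplus_nonneg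

end Scalar

section Clearing

variable {ι : Type*}

/-- The map `V ↦ G₊(u, V)` for an arbitrary dependence `x` of the asset values on payments and
equities. -/
noncomputable def equityMap (x : (ι → ℝ) × (ι → ℝ) → ι → ℝ) (l u V : ι → ℝ) : ι → ℝ :=
  fun i => surplus (x (u, V) i) (l i) (u i)

/-- The map `F_b` for arbitrary dependences `x`, `y` of the asset and liquidation values on
payments and equities. -/
noncomputable def paymentMap (x y : (ι → ℝ) × (ι → ℝ) → ι → ℝ) (l : ι → ℝ)
    (H : (ι → ℝ) → ι → ℝ) (b : ι → Bool) (p : ι → ℝ) : ι → ℝ :=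
  fun i => payment (b i) (x (p, H p) i) (y (p, H p) i) (l i)

variable {x y : (ι → ℝ) × (ι → ℝ) → ι → ℝ} {l u v V W : ι → ℝ} {H : (ι → ℝ) → ι → ℝ}

theorem equityMap_nonneg : 0 ≤ equityMap x l u V := fun _ => surplus_nonneg

theorem equityMap_le_equityMap (hx : Monotone x) (huv : u ≤ v) (hvl : v ≤ l) (hVW : V ≤ W) :
    equityMap x l u V ≤ equityMap x l v W :=
  fun i => surplus_le_surplus (hx (Prod.mk_le_mk.2 ⟨huv, hVW⟩) i) (huv i) (hvl i)

theorem nonneg_of_isLeast_fixedPoints_equityMap {z : ι → ℝ}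
    (hz : IsLeast (fixedPoints (equityMap x l u)) z) : 0 ≤ z :=
  equityMap_nonneg.trans_eq hz.1

theorem monotoneOn_of_isLeast_fixedPoints_equityMap (hx : Monotone x)
    (hH : ∀ u ∈ Icc 0 l, IsLeast (fixedPoints (equityMap x l u)) (H u)) :
    MonotoneOn H (Icc 0 l) := by
  intro u hu v hv huv
  have hmono : Monotone (equityMap x l u) := fun _ _ => equityMap_le_equityMap hx le_rfl hu.2
  have hHv : equityMap x l u (H v) ≤ H v :=
    (equityMap_le_equityMap hx huv hv.2 le_rfl).trans_eq (hH v hv).1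
  exact le_of_isLeast_fixedPoints_of_map_le (hH u hu) hmono (fun _ => equityMap_nonneg) hHv

theorem mapsTo_paymentMap (hl : 0 ≤ l) (hy : Monotone y) (hy0 : 0 ≤ y 0)
    (hyx : ∀ z, 0 ≤ z → y z ≤ x z) (hH : ∀ p ∈ Icc 0 l, 0 ≤ H p) (b : ι → Bool) :
    MapsTo (paymentMap x y l H b) (Icc 0 l) (Icc 0 l) := by
  intro p hp
  have hz : 0 ≤ (p, H p) := Prod.mk_le_mk.2 ⟨hp.1, hH p hp⟩
  exact ⟨fun i => payment_nonneg (hy0.trans (hy hz) i) (hl i),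
    fun i => payment_le (hyx _ hz i)⟩

theorem monotoneOn_paymentMap (hx : Monotone x) (hy : Monotone y)
    (hyx : ∀ z, 0 ≤ z → y z ≤ x z) (hH : ∀ p ∈ Icc 0 l, 0 ≤ H p)
    (hHmono : MonotoneOn H (Icc 0 l)) (b : ι → Bool) :
    MonotoneOn (paymentMap x y l H b) (Icc 0 l) := by
  intro p hp q hq hpq i
  have hz : (p, H p) ≤ (q, H q) := Prod.mk_le_mk.2 ⟨hpq, hHmono hp hq hpq⟩
  exact payment_le_payment (hx hz i) (hy hz i)
    (hyx _ (Prod.mk_le_mk.2 ⟨hp.1, hH p hp⟩) i)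

theorem exists_isLeast_and_isGreatest_fixedPoints_paymentMap (hl : 0 ≤ l) (hx : Monotone x)
    (hy : Monotone y) (hy0 : 0 ≤ y 0) (hyx : ∀ z, 0 ≤ z → y z ≤ x z)
    (hH : ∀ u ∈ Icc 0 l, IsLeast (fixedPoints (equityMap x l u)) (H u)) (b : ι → Bool) :
    (∃ p, IsLeast (Icc 0 l ∩ fixedPoints (paymentMap x y l H b)) p) ∧
      ∃ p, IsGreatest (Icc 0 l ∩ fixedPoints (paymentMap x y l H b)) p := by
  have hH0 : ∀ p ∈ Icc 0 l, 0 ≤ H p := fun p hp =>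
    nonneg_of_isLeast_fixedPoints_equityMap (hH p hp)
  have hHmono := monotoneOn_of_isLeast_fixedPoints_equityMap hx hH
  exact exists_isLeast_and_isGreatest_fixedPoints_Icc hl (mapsTo_paymentMap hl hy hy0 hyx hH0 b)
    (monotoneOn_paymentMap hx hy hyx hH0 hHmono b)

end Clearing

section CrossHoldings

theorem monotone_mulVec {m n R : Type*} [Fintype n] [Semiring R] [PartialOrder R]
    [IsOrderedRing R] {A : Matrix m n R} (hA : ∀ i j, 0 ≤ A i j) : Monotone (A *ᵥ ·) :=
  fun _ _ hvw i => dotProduct_le_dotProduct_of_nonneg_left hvw (hA i)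

variable {ι : Type*} [Fintype ι]

/-- The asset values `x(p, V) = e + Πᵀp + ΘᵀV`, as a function of `z = (p, V)`. -/
def assetValue (e : ι → ℝ) (P Th : Matrix ι ι ℝ) (z : (ι → ℝ) × (ι → ℝ)) : ι → ℝ :=
  e + Pᵀ *ᵥ z.1 + Thᵀ *ᵥ z.2

/-- The liquidation values `y(p, V) = αe + βΠᵀp + γΘᵀV`, as a function of `z = (p, V)`. -/
def liquidationValue (α β γ : ℝ) (e : ι → ℝ) (P Th : Matrix ι ι ℝ)
    (z : (ι → ℝ) × (ι → ℝ)) : ι → ℝ :=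
  α • e + β • Pᵀ *ᵥ z.1 + γ • Thᵀ *ᵥ z.2

variable {e l : ι → ℝ} {P Th : Matrix ι ι ℝ} {α β γ : ℝ}

theorem monotone_assetValue (hP : ∀ i j, 0 ≤ P i j) (hTh : ∀ i j, 0 ≤ Th i j) :
    Monotone (assetValue e P Th) := fun _ _ hz =>
  add_le_add (add_le_add_right (monotone_mulVec (fun i j => hP j i) hz.1) e)
    (monotone_mulVec (fun i j => hTh j i) hz.2)

theorem monotone_liquidationValue (hP : ∀ i j, 0 ≤ P i j) (hTh : ∀ i j, 0 ≤ Th i j)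
    (hβ : 0 ≤ β) (hγ : 0 ≤ γ) : Monotone (liquidationValue α β γ e P Th) := fun _ _ hz =>
  add_le_add
    (add_le_add_right
      (smul_le_smul_of_nonneg_left (monotone_mulVec (fun i j => hP j i) hz.1) hβ) (α • e))
    (smul_le_smul_of_nonneg_left (monotone_mulVec (fun i j => hTh j i) hz.2) hγ)

theorem liquidationValue_zero_nonneg (he : 0 ≤ e) (hα : 0 ≤ α) :
    0 ≤ liquidationValue α β γ e P Th 0 := by
  simpa [liquidationValue] using smul_nonneg hα he

theorem liquidationValue_le_assetValue (he : 0 ≤ e) (hP : ∀ i j, 0 ≤ P i j)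
    (hTh : ∀ i j, 0 ≤ Th i j) (hα : α ≤ 1) (hβ : β ≤ 1) (hγ : γ ≤ 1)
    {z : (ι → ℝ) × (ι → ℝ)} (hz : 0 ≤ z) :
    liquidationValue α β γ e P Th z ≤ assetValue e P Th z := by
  have hPz : 0 ≤ Pᵀ *ᵥ z.1 := by
    simpa using monotone_mulVec (A := Pᵀ) (fun i j => hP j i) hz.1
  have hThz : 0 ≤ Thᵀ *ᵥ z.2 := by
    simpa using monotone_mulVec (A := Thᵀ) (fun i j => hTh j i) hz.2
  exact add_le_add
    (add_le_add (smul_le_of_le_one_left he hα) (smul_le_of_le_one_left hPz hβ))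
    (smul_le_of_le_one_left hThz hγ)

theorem stmt6_general (he : 0 ≤ e) (hl : 0 ≤ l) (hP : ∀ i j, 0 ≤ P i j)
    (hTh : ∀ i j, 0 ≤ Th i j) (hα : α ∈ Icc 0 1) (hβ : β ∈ Icc 0 1) (hγ : γ ∈ Icc 0 1)
    {H : (ι → ℝ) → ι → ℝ}
    (hH : ∀ u ∈ Icc 0 l, IsLeast (fixedPoints (equityMap (assetValue e P Th) l u)) (H u))
    (b : ι → Bool) :
    let F := paymentMap (assetValue e P Th) (liquidationValue α β γ e P Th) l H b
    (∃ p ∈ Icc 0 l, p = F p ∧ ∀ q ∈ Icc 0 l, q = F q → p ≤ q) ∧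
      ∃ p ∈ Icc 0 l, p = F p ∧ ∀ q ∈ Icc 0 l, q = F q → q ≤ p := by
  obtain ⟨⟨r, ⟨hr, hrF⟩, hr_le⟩, s, ⟨hs, hsF⟩, hle_s⟩ :=
    exists_isLeast_and_isGreatest_fixedPoints_paymentMap hl (monotone_assetValue hP hTh)
      (monotone_liquidationValue hP hTh hβ.1 hγ.1) (liquidationValue_zero_nonneg he hα.1)
      (fun _ hz => liquidationValue_le_assetValue he hP hTh hα.2 hβ.2 hγ.2 hz) hH b
  exact ⟨⟨r, hr, hrF.symm, fun q hq hqF => hr_le ⟨hq, hqF.symm⟩⟩,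
    ⟨s, hs, hsF.symm, fun q hq hqF => hle_s ⟨hq, hqF.symm⟩⟩⟩

end CrossHoldings

/-- For every `b ∈ {0,1}^N`, the set of fixpoints
`{p ∈ [0,l] : p = F_b(p)}` is nonempty and contains a minimal element and a maximal
element with respect to the componentwise order. -/
theorem stmt6 (N : ℕ) (hN : 1 < N)
    (e l : Fin N → ℝ) (he : 0 ≤ e) (hl : 0 ≤ l)
    (P Th : Matrix (Fin N) (Fin N) ℝ)
    (hP : ∀ i j, 0 ≤ P i j) (hProw : ∀ i, ∑ j, P i j = 1)
    (hTh : ∀ i j, 0 ≤ Th i j) (hThrow : ∀ i, ∑ j, Th i j ≤ 1)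
    (α β γ : ℝ) (hα : α ∈ Set.Icc (0:ℝ) 1) (hβ : β ∈ Set.Icc (0:ℝ) 1)
    (hγ : γ ∈ Set.Icc (0:ℝ) 1)
    (Gp : (Fin N → ℝ) → (Fin N → ℝ) → Fin N → ℝ)
    (hGp : Gp = fun u V i =>
      max (e i + P.transpose.mulVec u i + Th.transpose.mulVec V i - l i) 0 *
        (if u i = l i then (1 : ℝ) else 0))
    (H : (Fin N → ℝ) → Fin N → ℝ)
    (hH : ∀ u ∈ Set.Icc (0 : Fin N → ℝ) l,
      H u = Gp u (H u) ∧ ∀ W : Fin N → ℝ, W = Gp u W → W = H u)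
    (F : (Fin N → Bool) → (Fin N → ℝ) → Fin N → ℝ)
    (hF : F = fun b p i =>
      let V := H p
      let xi := e i + P.transpose.mulVec p i + Th.transpose.mulVec V i
      let yi := α * e i + β * P.transpose.mulVec p i + γ * Th.transpose.mulVec V i
      let di : ℝ := if xi < l i then 1 else 0
      if b i then yi * di + l i * (1 - di) else min yi (l i)) :
    ∀ b : Fin N → Bool,
      (∃ pmin : Fin N → ℝ, pmin ∈ Set.Icc (0 : Fin N → ℝ) l ∧ pmin = F b pmin ∧
        ∀ q ∈ Set.Icc (0 : Fin N → ℝ) l, q = F b q → pmin ≤ q) ∧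
      (∃ pmax : Fin N → ℝ, pmax ∈ Set.Icc (0 : Fin N → ℝ) l ∧ pmax = F b pmax ∧
        ∀ q ∈ Set.Icc (0 : Fin N → ℝ) l, q = F b q → q ≤ pmax) := by
  subst hGp hF
  exact stmt6_general he hl hP hTh hα hβ hγ fun u hu =>
    ⟨(hH u hu).1.symm, fun W hW => ((hH u hu).2 W hW.symm).ge⟩
end

section
/- If (â,p̂,V̂) is optimal for problem P1 (admissible, with f(â,p̂,V̂) ≥ f(a,p,V) for every admissible (a,p,V)), then â = 1_{p̂=l}, i.e., âⁱ = 1 if p̂ⁱ = lⁱ and âⁱ = 0 if p̂ⁱ < lⁱ. -/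
open Matrix

/-!
Both halves of `a = 1_{p = l}` are proved by improving one coordinate. If `p i = l i` but `a i = 0`,
then `l i = p i ≤ y i ≤ x i`, so bank `i` can afford its liability without any equity (`V i = 0`
because `V i ≤ κ * a i`) and may be declared solvent. If `a i = 1` but `p i < l i`, then `p i` may
be raised to `l i`, since `0 ≤ y` and paying more only increases `x` and `y`. In both cases the new
triple is admissible and the objective has strictly increased.
-/

theorem strictMono_sum_pi {ι α R : Type*} [Fintype ι] [PartialOrder α] [AddCommMonoid R]
    [PartialOrder R] [IsOrderedCancelAddMonoid R] {g : ι → α → R} (hg : ∀ i, StrictMono (g i)) :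
    StrictMono fun u : ι → α => ∑ i, g i (u i) := by
  intro u v huv
  obtain ⟨hle, i, hlt⟩ := Pi.lt_def.1 huv
  exact Finset.sum_lt_sum (fun j _ => (hg j).monotone (hle j)) ⟨i, Finset.mem_univ i, hg i hlt⟩

section MulVec

variable {m n R : Type*} [Fintype n] [NonUnitalNonAssocSemiring R] [Preorder R] [AddLeftMono R]
  [PosMulMono R] {A : Matrix m n R}

theorem mulVec_mono (hA : ∀ i j, 0 ≤ A i j) : Monotone (A *ᵥ ·) :=
  fun _ _ huv i => Finset.sum_le_sum fun j _ => mul_le_mul_of_nonneg_left (huv j) (hA i j)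

theorem mulVec_nonneg (hA : ∀ i j, 0 ≤ A i j) {u : n → R} (hu : 0 ≤ u) : 0 ≤ A *ᵥ u :=
  (mulVec_zero A).ge.trans (mulVec_mono hA hu)

end MulVec

/-- A financial network in which default may destroy value: if the banks make payments `p` and have
equities `V`, then `assets p V` is the value of the banks' assets without default losses (the
paper's `x(p,V)`) and `recovery p V` is what is left of it after default losses (the paper's
`y(p,V)`). The vector `liability` is the paper's `l` and `equityCap` its constant `κ`. -/
structure ClearingModel (ι R : Type*) [Zero R] [Preorder R] where
  liability : ι → R
  equityCap : R
  assets : (ι → R) → (ι → R) → ι → R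
  recovery : (ι → R) → (ι → R) → ι → R
  equityCap_nonneg : 0 ≤ equityCap
  assets_mono : ∀ V, Monotone (assets · V)
  recovery_mono : ∀ V, Monotone (recovery · V)
  recovery_nonneg : ∀ {p V}, 0 ≤ p → 0 ≤ V → 0 ≤ recovery p V
  recovery_le_assets : ∀ {p V}, 0 ≤ p → 0 ≤ V → recovery p V ≤ assets p V

namespace ClearingModel

variable {ι R S : Type*} [Ring R] [PartialOrder R]

/-- Feasibility of a triple `(a, p, V)` for the problem P1, where `a` is the vector of solvency
indicators, `p` the vector of payments and `V` the vector of equities. -/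
def Admissible (M : ClearingModel ι R) (a p V : ι → R) : Prop :=
  (∀ i, a i = 0 ∨ a i = 1) ∧ p ∈ Set.Icc 0 M.liability ∧ 0 ≤ V ∧
  (∀ i, p i ≤ M.recovery p V i + a i * M.liability i) ∧
  (∀ i, a i * M.liability i ≤ M.assets p V i) ∧
  (∀ i, V i ≤ M.assets p V i - a i * M.liability i) ∧
  (∀ i, V i ≤ M.equityCap * a i)

/-- Optimality of a triple `(a, p, V)` for the problem P1 with objective `f`, which is allowed to
take values in any preorder. -/
def IsOptimal [Preorder S] (M : ClearingModel ι R) (f : (ι → R) → (ι → R) → (ι → R) → S)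
    (a p V : ι → R) : Prop :=
  M.Admissible a p V ∧ ∀ a' p' V', M.Admissible a' p' V' → f a' p' V' ≤ f a p V

section Improvement

variable [IsOrderedRing R] {M : ClearingModel ι R} {a p V : ι → R} {i : ι}

theorem Admissible.update_indicator_one [DecidableEq ι] (h : M.Admissible a p V) (ha : a i = 0)
    (hp : p i = M.liability i) : M.Admissible (Function.update a i 1) p V := by
  obtain ⟨ha01, hp_mem, hV, hp_le, ha_le, hV_le, hV_cap⟩ := h
  have hV_zero : V i = 0 := le_antisymm (by simpa [ha] using hV_cap i) (hV i)
  have h_afford : M.liability i ≤ M.assets p V i :=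
    calc M.liability i = p i := hp.symm
      _ ≤ M.recovery p V i := by simpa [ha] using hp_le i
      _ ≤ M.assets p V i := M.recovery_le_assets hp_mem.1 hV i
  refine ⟨?_, hp_mem, hV, ?_, ?_, ?_, ?_⟩
  · exact (Function.forall_update_iff a fun _ b => b = 0 ∨ b = 1).2
      ⟨.inr rfl, fun j _ => ha01 j⟩
  · refine (Function.forall_update_iff a
      fun j b => p j ≤ M.recovery p V j + b * M.liability j).2 ⟨?_, fun j _ => hp_le j⟩
    rw [hp, one_mul]
    exact le_add_of_nonneg_left (M.recovery_nonneg hp_mem.1 hV i)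
  · exact (Function.forall_update_iff a fun j b => b * M.liability j ≤ M.assets p V j).2
      ⟨by rwa [one_mul], fun j _ => ha_le j⟩
  · exact (Function.forall_update_iff a
      fun j b => V j ≤ M.assets p V j - b * M.liability j).2
      ⟨by rwa [hV_zero, one_mul, sub_nonneg], fun j _ => hV_le j⟩
  · exact (Function.forall_update_iff a fun j b => V j ≤ M.equityCap * b).2
      ⟨by rw [hV_zero, mul_one]; exact M.equityCap_nonneg, fun j _ => hV_cap j⟩

theorem Admissible.update_payment_liability [DecidableEq ι] (h : M.Admissible a p V)
    (ha : a i = 1) : M.Admissible a (Function.update p i (M.liability i)) V := by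
  obtain ⟨ha01, ⟨hp_nonneg, hp_liability⟩, hV, hp_le, ha_le, hV_le, hV_cap⟩ := h
  set q := Function.update p i (M.liability i)
  have hpq : p ≤ q := le_update_self_iff.2 (hp_liability i)
  have hq_liability : q ≤ M.liability := update_le_iff.2 ⟨le_rfl, fun j _ => hp_liability j⟩
  have h_assets : M.assets p V ≤ M.assets q V := M.assets_mono V hpq
  refine ⟨ha01, ⟨hp_nonneg.trans hpq, hq_liability⟩, hV, ?_, fun j => (ha_le j).trans (h_assets j),
    fun j => (hV_le j).trans (sub_le_sub_right (h_assets j) _), hV_cap⟩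
  refine (Function.forall_update_iff p
    fun j b => b ≤ M.recovery q V j + a j * M.liability j).2 ⟨?_, fun j _ => ?_⟩
  · rw [ha, one_mul]
    exact le_add_of_nonneg_left (M.recovery_nonneg (hp_nonneg.trans hpq) hV i)
  · exact (hp_le j).trans (add_le_add_left (M.recovery_mono V hpq j) _)

variable [Preorder S] {f : (ι → R) → (ι → R) → (ι → R) → S}

theorem IsOptimal.indicator_eq_one (hf : ∀ p V, StrictMono (f · p V)) (h : M.IsOptimal f a p V)
    (hp : p i = M.liability i) : a i = 1 := by
  classical
  by_contra ha_ne
  obtain ⟨h_adm, h_max⟩ := h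
  have ha : a i = 0 := (h_adm.1 i).resolve_right ha_ne
  have h_lt : a < Function.update a i 1 :=
    lt_update_self_iff.2 (lt_of_le_of_ne (ha.trans_le zero_le_one) ha_ne)
  exact (hf p V h_lt).not_ge (h_max _ _ _ (h_adm.update_indicator_one ha hp))

theorem IsOptimal.indicator_eq_zero (hf : ∀ a V, StrictMono (f a · V)) (h : M.IsOptimal f a p V)
    (hp : p i ≠ M.liability i) : a i = 0 := by
  classical
  by_contra ha_ne
  obtain ⟨h_adm, h_max⟩ := h
  have ⟨ha01, ⟨_, hp_liability⟩, _⟩ := h_adm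
  have ha : a i = 1 := (ha01 i).resolve_left ha_ne
  have h_lt : p < Function.update p i (M.liability i) :=
    lt_update_self_iff.2 (lt_of_le_of_ne (hp_liability i) hp)
  exact (hf a V h_lt).not_ge (h_max _ _ _ (h_adm.update_payment_liability ha))

end Improvement

/-- The network with affine asset values `e + Pᵀ p + Thᵀ V`, of which a default leaves the fractions
`α`, `β` and `γ` of the three summands; `P` and `Th` are the paper's `Π` and `Θ`. -/
def affine [IsOrderedRing R] [Fintype ι] {e : ι → R} {P Th : Matrix ι ι R} {α β γ κ : R}
    (l : ι → R) (he : 0 ≤ e) (hP : ∀ i j, 0 ≤ P i j) (hTh : ∀ i j, 0 ≤ Th i j)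
    (hα : α ∈ Set.Icc 0 1) (hβ : β ∈ Set.Icc 0 1) (hγ : γ ∈ Set.Icc 0 1) (hκ : 0 ≤ κ) :
    ClearingModel ι R :=
  have hPt {p : ι → R} (hp : 0 ≤ p) : 0 ≤ Pᵀ *ᵥ p := mulVec_nonneg (fun i j => hP j i) hp
  have hTht {V : ι → R} (hV : 0 ≤ V) : 0 ≤ Thᵀ *ᵥ V := mulVec_nonneg (fun i j => hTh j i) hV
  { liability := l
    equityCap := κ
    assets p V i := e i + (Pᵀ *ᵥ p) i + (Thᵀ *ᵥ V) i
    recovery p V i := α * e i + β * (Pᵀ *ᵥ p) i + γ * (Thᵀ *ᵥ V) i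
    equityCap_nonneg := hκ
    assets_mono _ _ _ hpq i := add_le_add_left
      (add_le_add_right (mulVec_mono (fun i j => hP j i) hpq i) _) _
    recovery_mono _ _ _ hpq i := add_le_add_left (add_le_add_right
      (mul_le_mul_of_nonneg_left (mulVec_mono (fun i j => hP j i) hpq i) hβ.1) _) _
    recovery_nonneg hp hV i := add_nonneg
      (add_nonneg (mul_nonneg hα.1 (he i)) (mul_nonneg hβ.1 (hPt hp i)))
      (mul_nonneg hγ.1 (hTht hV i))
    recovery_le_assets hp hV i := add_le_add
      (add_le_add (mul_le_of_le_one_left (he i) hα.2) (mul_le_of_le_one_left (hPt hp i) hβ.2))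
      (mul_le_of_le_one_left (hTht hV i) hγ.2) }

end ClearingModel

section LinearObjective

variable {ι R : Type*} [Fintype ι] [Semiring R]

/-- The linear objective of the problem P1, with weights `f₁`, `f₂` and `f₃` on the solvency
indicators `a`, the payments `p` and the equities `V`. -/
def linearObjective (f₁ f₂ f₃ a p V : ι → R) : R :=
  ∑ i, (f₁ i * a i + f₂ i * p i + f₃ i * V i)

variable [PartialOrder R] [IsStrictOrderedRing R] {f₁ f₂ : ι → R}

theorem linearObjective_strictMono_indicator (hf₁ : ∀ i, 0 < f₁ i) (f₂ f₃ p V : ι → R) :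
    StrictMono (linearObjective f₁ f₂ f₃ · p V) :=
  strictMono_sum_pi fun i =>
    ((strictMono_mul_left_of_pos (hf₁ i)).add_const (f₂ i * p i)).add_const (f₃ i * V i)

theorem linearObjective_strictMono_payment (hf₂ : ∀ i, 0 < f₂ i) (f₁ f₃ a V : ι → R) :
    StrictMono (linearObjective f₁ f₂ f₃ a · V) :=
  strictMono_sum_pi fun i =>
    ((strictMono_mul_left_of_pos (hf₂ i)).const_add (f₁ i * a i)).add_const (f₃ i * V i)

end LinearObjective

theorem stmt10_general {ι R S : Type*} [Ring R] [PartialOrder R] [IsOrderedRing R]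
    [DecidableEq R] [Preorder S] {M : ClearingModel ι R} {f : (ι → R) → (ι → R) → (ι → R) → S}
    (hf_indicator : ∀ p V, StrictMono (f · p V)) (hf_payment : ∀ a V, StrictMono (f a · V))
    {a p V : ι → R} (h : M.IsOptimal f a p V) :
    a = fun i => if p i = M.liability i then 1 else 0 := by
  funext i
  split_ifs with hp
  · exact h.indicator_eq_one hf_indicator hp
  · exact h.indicator_eq_zero hf_payment hp

/-- If `(â,p̂,V̂)` is optimal for problem P1 (admissible, maximizing `f`
over admissible triples), then `â = 1_{p̂=l}`: `âⁱ = 1` if `p̂ⁱ = lⁱ` and `âⁱ = 0`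
if `p̂ⁱ < lⁱ`. -/
theorem stmt10 (N : ℕ) (hN : 1 < N)
    (e l : Fin N → ℝ) (he : 0 ≤ e) (hl : 0 ≤ l)
    (P Th : Matrix (Fin N) (Fin N) ℝ)
    (hP : ∀ i j, 0 ≤ P i j) (hProw : ∀ i, ∑ j, P i j = 1)
    (hTh : ∀ i j, 0 ≤ Th i j) (hThrow : ∀ i, ∑ j, Th i j ≤ 1)
    (α β γ : ℝ) (hα : α ∈ Set.Icc (0:ℝ) 1) (hβ : β ∈ Set.Icc (0:ℝ) 1)
    (hγ : γ ∈ Set.Icc (0:ℝ) 1)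
    (hInv : IsUnit (1 - Th.transpose))
    (hInvNonneg : ∀ i j, 0 ≤ (1 - Th.transpose)⁻¹ i j)
    (K : Fin N → ℝ)
    (hK : K = (1 - Th.transpose)⁻¹.mulVec
      (fun i => max (e i + P.transpose.mulVec l i - l i) 0))
    (κ : ℝ) (hκ : κ = ⨆ i, K i)
    (f₁ f₂ f₃ : Fin N → ℝ)
    (hf₁ : ∀ i, 0 < f₁ i) (hf₂ : ∀ i, 0 < f₂ i) (hf₃ : ∀ i, 0 < f₃ i)
    (f : (Fin N → ℝ) → (Fin N → ℝ) → (Fin N → ℝ) → ℝ)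
    (hf : f = fun a p V => ∑ i, (f₁ i * a i + f₂ i * p i + f₃ i * V i))
    (Adm1 : (Fin N → ℝ) → (Fin N → ℝ) → (Fin N → ℝ) → Prop)
    (hAdm1 : ∀ a p V : Fin N → ℝ, Adm1 a p V ↔
      ((∀ i, a i = 0 ∨ a i = 1) ∧ p ∈ Set.Icc (0 : Fin N → ℝ) l ∧ 0 ≤ V ∧
      (∀ i, p i ≤ α * e i + β * P.transpose.mulVec p i + γ * Th.transpose.mulVec V i
        + a i * l i) ∧
      (∀ i, a i * l i ≤ e i + P.transpose.mulVec p i + Th.transpose.mulVec V i) ∧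
      (∀ i, V i ≤ e i + P.transpose.mulVec p i + Th.transpose.mulVec V i - a i * l i) ∧
      (∀ i, V i ≤ κ * a i)))
    (ahat phat Vhat : Fin N → ℝ)
    (hAdm : Adm1 ahat phat Vhat)
    (hOpt : ∀ a p V : Fin N → ℝ, Adm1 a p V → f a p V ≤ f ahat phat Vhat) :
    ahat = fun i => if phat i = l i then (1 : ℝ) else 0 := by
  have hκ_nonneg : 0 ≤ κ := hκ ▸ Real.iSup_nonneg
    (hK ▸ mulVec_nonneg hInvNonneg fun _ => le_max_right _ _)
  simp only [hAdm1, hf] at hAdm hOpt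
  exact stmt10_general (M := .affine l he hP hTh hα hβ hγ hκ_nonneg)
    (linearObjective_strictMono_indicator hf₁ f₂ f₃)
    (linearObjective_strictMono_payment hf₂ f₁ f₃) ⟨hAdm, hOpt⟩
end

section
/- If (â,p̂,V̂) is optimal for problem P1, then (p̂,V̂) is a clearing pair, and it is maximal: for every clearing pair (p,V) with V ≤ κ·1 one has p ≤ p̂ and V ≤ V̂. -/
open Matrix

/-!
Since `a` is a 0-1 vector and the total and recovery values are monotone, the admissible triples
`(a, p, V)` are closed under componentwise suprema. A strictly increasing objective is therefore
maximized only at the greatest admissible triple, and such a triple satisfies the clearing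
conditions because any slack could be used to enlarge it: `p = l ⊓ (y(p, V) + a ∘ l)`,
`V = κ ∘ a ⊓ (x(p, V) - a ∘ l)`, and `aᵢ = 0` only if `yᵢ(p, V) < lᵢ`. The cap `κ` never binds: an
equity vector is at most `(x(l, V) - l)⁺`, and vectors with this property are bounded by `K`.
Conversely, a clearing pair together with the indicator of `p = l` is admissible, hence dominated.
-/

theorem isGreatest_of_supClosed_of_isMaxOn {α β : Type*} [SemilatticeSup α] [Preorder β]
    {s : Set α} {f : α → β} {m : α} (hs : SupClosed s) (hf : StrictMonoOn f s) (hm : m ∈ s)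
    (hmax : IsMaxOn f s m) : IsGreatest s m := by
  refine ⟨hm, fun t ht => ?_⟩
  have hsup : m ⊔ t ∈ s := hs hm ht
  by_contra hle
  exact (hf hm hsup (left_lt_sup.2 hle)).not_ge (hmax hsup)

theorem strictMono_add_of_prod {α β M : Type*} [PartialOrder α] [PartialOrder β]
    [AddCommMonoid M] [PartialOrder M] [IsOrderedCancelAddMonoid M] {f : α → M} {g : β → M}
    (hf : StrictMono f) (hg : StrictMono g) : StrictMono fun t : α × β => f t.1 + g t.2 := by
  intro s t hst
  rcases Prod.lt_iff.1 hst with ⟨h₁, h₂⟩ | ⟨h₁, h₂⟩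
  · exact add_lt_add_of_lt_of_le (hf h₁) (hg.monotone h₂)
  · exact add_lt_add_of_le_of_lt (hf.monotone h₁) (hg h₂)

section OrderedMatrix

variable {m ι R : Type*} [Fintype ι]

section StrictOrderedSemiring

variable [Semiring R] [PartialOrder R] [IsStrictOrderedRing R]

theorem strictMono_dotProduct {w : ι → R} (hw : ∀ i, 0 < w i) :
    StrictMono fun u : ι → R => w ⬝ᵥ u := by
  intro u v huv
  obtain ⟨hle, i, hi⟩ := Pi.lt_def.1 huv
  exact Finset.sum_lt_sum (fun j _ => mul_le_mul_of_nonneg_left (hle j) (hw j).le)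
    ⟨i, Finset.mem_univ i, mul_lt_mul_of_pos_left hi (hw i)⟩

theorem strictMono_sum_mul_add_mul_add_mul {f₁ f₂ f₃ : ι → R} (hf₁ : ∀ i, 0 < f₁ i)
    (hf₂ : ∀ i, 0 < f₂ i) (hf₃ : ∀ i, 0 < f₃ i) :
    StrictMono fun t : (ι → R) × (ι → R) × (ι → R) =>
      ∑ i, (f₁ i * t.1 i + f₂ i * t.2.1 i + f₃ i * t.2.2 i) := by
  simpa only [dotProduct, Finset.sum_add_distrib, add_assoc] using
    strictMono_add_of_prod (strictMono_dotProduct hf₁)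
      (strictMono_add_of_prod (strictMono_dotProduct hf₂) (strictMono_dotProduct hf₃))

end StrictOrderedSemiring

section OrderedSemiring

variable [Semiring R] [PartialOrder R] [IsOrderedRing R]

theorem monotone_mulVec_of_nonneg {A : Matrix m ι R} (hA : ∀ i j, 0 ≤ A i j) :
    Monotone fun u : ι → R => A *ᵥ u :=
  fun _ _ huv i => dotProduct_le_dotProduct_of_nonneg_left huv (hA i)

theorem mulVec_nonneg_of_nonneg {A : Matrix m ι R} (hA : ∀ i j, 0 ≤ A i j) {u : ι → R}
    (hu : 0 ≤ u) : 0 ≤ A *ᵥ u :=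
  fun i => dotProduct_nonneg_of_nonneg (hA i) hu

end OrderedSemiring

theorem le_inv_mulVec_of_mulVec_le [DecidableEq ι] [CommRing R] [PartialOrder R]
    [IsOrderedRing R] {M : Matrix ι ι R} (hM : IsUnit M) (hM_inv : ∀ i j, 0 ≤ M⁻¹ i j) {u b : ι → R}
    (h : M *ᵥ u ≤ b) : u ≤ M⁻¹ *ᵥ b :=
  calc
    u = M⁻¹ *ᵥ (M *ᵥ u) := by
      rw [mulVec_mulVec, nonsing_inv_mul _ ((isUnit_iff_isUnit_det M).1 hM), one_mulVec]
    _ ≤ M⁻¹ *ᵥ b := monotone_mulVec_of_nonneg hM_inv h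

end OrderedMatrix

section Clearing

variable {ι R : Type*} [CommRing R] [LinearOrder R]

/-- Clearing pairs of payments `p` and equities `V`, for liabilities `l`, total values `x (p, V)`
and recovery values `y (p, V)`; the valuations `x` and `y` need not be affine. -/
structure IsClearing (x y : (ι → R) × (ι → R) → ι → R) (l p V : ι → R) : Prop where
  payment_mem : p ∈ Set.Icc 0 l
  equity_nonneg : 0 ≤ V
  limited_liability : p ≤ x (p, V)
  absolute_priority : ∀ i, p i = l i ∨ p i = y (p, V) i
  equity_eq : ∀ i, (p i = l i → V i = x (p, V) i - p i) ∧ (p i ≠ l i → V i = 0)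

/-- The constraints of problem P1 on a solvency pattern `a`, payments `p` and equities `V`, for
general valuations `x`, `y` and a cap `κ` on equity that may vary between institutions. -/
structure IsAdmissible (x y : (ι → R) × (ι → R) → ι → R) (l κ a p V : ι → R) : Prop where
  binary : ∀ i, a i = 0 ∨ a i = 1
  payment_mem : p ∈ Set.Icc 0 l
  equity_nonneg : 0 ≤ V
  payment_le : p ≤ y (p, V) + a * l
  liability_le : a * l ≤ x (p, V)
  equity_le : V ≤ x (p, V) - a * l
  equity_le_cap : V ≤ κ * a

/-- The feasible region of problem P1, as a subset of the lattice of triples `(a, p, V)`. -/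
def admissibleSet (x y : (ι → R) × (ι → R) → ι → R) (l κ : ι → R) :
    Set ((ι → R) × (ι → R) × (ι → R)) :=
  {t | IsAdmissible x y l κ t.1 t.2.1 t.2.2}

/-- The pattern `1_{p = l}` of institutions that pay their liabilities in full. -/
def solvencyPattern (l p : ι → R) : ι → R := fun i => if p i = l i then 1 else 0

/-- `κ` bounds every equity vector that could be realized if all liabilities were paid in full;
this is what makes the equity cap of problem P1 harmless. -/
def IsEquityBound (x : (ι → R) × (ι → R) → ι → R) (l κ : ι → R) : Prop :=
  ∀ W : ι → R, 0 ≤ W → W ≤ (x (l, W) - l)⁺ → W ≤ κ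

variable {x y : (ι → R) × (ι → R) → ι → R} {l κ a a' p p' V V' : ι → R}

theorem mem_admissibleSet : (a, p, V) ∈ admissibleSet x y l κ ↔ IsAdmissible x y l κ a p V :=
  Iff.rfl

protected theorem IsEquityBound.nonneg (hκ : IsEquityBound x l κ) : 0 ≤ κ :=
  hκ 0 le_rfl (posPart_nonneg _)

namespace IsAdmissible

theorem liability_nonneg (h : IsAdmissible x y l κ a p V) : 0 ≤ l :=
  h.payment_mem.1.trans h.payment_mem.2

theorem equity_eq_zero (h : IsAdmissible x y l κ a p V) {i : ι} (hi : a i = 0) : V i = 0 :=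
  le_antisymm (by simpa [hi] using h.equity_le_cap i) (h.equity_nonneg i)

variable [IsStrictOrderedRing R]

theorem pattern_nonneg (h : IsAdmissible x y l κ a p V) : 0 ≤ a := fun i => by
  rcases h.binary i with hi | hi <;> simp [hi]

theorem pattern_le_one (h : IsAdmissible x y l κ a p V) : a ≤ 1 := fun i => by
  rcases h.binary i with hi | hi <;> simp [hi]

theorem equity_le_posPart (hx : Monotone x) (h : IsAdmissible x y l κ a p V) :
    V ≤ (x (l, V) - l)⁺ := by
  intro i
  rcases h.binary i with hi | hi
  · exact (h.equity_eq_zero hi).trans_le (posPart_nonneg _)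
  · have hVi : V i ≤ x (p, V) i - l i := by simpa [hi] using h.equity_le i
    have hxi : x (p, V) i ≤ x (l, V) i := hx (Prod.mk_le_mk.2 ⟨h.payment_mem.2, le_rfl⟩) i
    exact (hVi.trans (sub_le_sub_right hxi _)).trans (le_posPart _)

theorem equity_le_sub_sup (hx : Monotone x) (h : IsAdmissible x y l κ a p V)
    (h' : IsAdmissible x y l κ a' p' V') :
    V ≤ x (p ⊔ p', V ⊔ V') - (a ⊔ a') * l := by
  intro i
  have hxi : x (p, V) i ≤ x (p ⊔ p', V ⊔ V') i :=
    hx (Prod.mk_le_mk.2 ⟨le_sup_left, le_sup_left⟩) i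
  have hxi' : x (p', V') i ≤ x (p ⊔ p', V ⊔ V') i :=
    hx (Prod.mk_le_mk.2 ⟨le_sup_right, le_sup_right⟩) i
  have hVi : V i ≤ x (p, V) i - a i * l i := h.equity_le i
  have hl' : a' i * l i ≤ x (p', V') i := h'.liability_le i
  rcases h.binary i with hi | hi
  · have hsup : (a ⊔ a') i = a' i := by simpa [hi] using h'.pattern_nonneg i
    simp only [Pi.sub_apply, Pi.mul_apply, hsup]
    linarith [h.equity_eq_zero hi]
  · have hsup : (a ⊔ a') i = a i := by simpa [hi] using h'.pattern_le_one i
    simp only [Pi.sub_apply, Pi.mul_apply, hsup]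
    linarith

protected theorem sup (hx : Monotone x) (hy : Monotone y) (hκ : 0 ≤ κ)
    (h : IsAdmissible x y l κ a p V)
    (h' : IsAdmissible x y l κ a' p' V') :
    IsAdmissible x y l κ (a ⊔ a') (p ⊔ p') (V ⊔ V') where
  binary i := by
    rcases max_choice (a i) (a' i) with hi | hi
    · exact (h.binary i).imp hi.trans hi.trans
    · exact (h'.binary i).imp hi.trans hi.trans
  payment_mem := ⟨le_sup_of_le_left h.payment_mem.1, sup_le h.payment_mem.2 h'.payment_mem.2⟩
  equity_nonneg := le_sup_of_le_left h.equity_nonneg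
  payment_le := by
    have hl := h.liability_nonneg
    exact sup_le
      (h.payment_le.trans (add_le_add (hy (Prod.mk_le_mk.2 ⟨le_sup_left, le_sup_left⟩))
        (mul_le_mul_of_nonneg_right le_sup_left hl)))
      (h'.payment_le.trans (add_le_add (hy (Prod.mk_le_mk.2 ⟨le_sup_right, le_sup_right⟩))
        (mul_le_mul_of_nonneg_right le_sup_right hl)))
  liability_le := sub_nonneg.1 (h.equity_nonneg.trans (h.equity_le_sub_sup hx h'))
  equity_le := sup_le (h.equity_le_sub_sup hx h') (by
    simpa only [sup_comm] using h'.equity_le_sub_sup hx h)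
  equity_le_cap := sup_le (h.equity_le_cap.trans (mul_le_mul_of_nonneg_left le_sup_left hκ))
    (h'.equity_le_cap.trans (mul_le_mul_of_nonneg_left le_sup_right hκ))

theorem update_pattern_one [DecidableEq ι] (hyx : ∀ q, 0 ≤ q → y q ≤ x q) (hκ : 0 ≤ κ)
    (h : IsAdmissible x y l κ a p V) {i : ι} (hi : a i = 0) (hly : l i ≤ y (p, V) i) :
    IsAdmissible x y l κ (Function.update a i 1) p V := by
  have hle : a ≤ Function.update a i 1 := le_update_self_iff.2 (h.pattern_le_one i)
  have hlx : Function.update a i 1 * l ≤ x (p, V) := by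
    intro j
    rcases eq_or_ne j i with rfl | hj
    · simpa using hly.trans (hyx (p, V) ⟨h.payment_mem.1, h.equity_nonneg⟩ j)
    · simpa [hj] using h.liability_le j
  refine ⟨fun j => ?_, h.payment_mem, h.equity_nonneg,
    h.payment_le.trans (add_le_add_right (mul_le_mul_of_nonneg_right hle h.liability_nonneg) _),
    hlx, fun j => ?_, h.equity_le_cap.trans (mul_le_mul_of_nonneg_left hle hκ)⟩
  · rcases eq_or_ne j i with rfl | hj
    · simp
    · simpa [hj] using h.binary j
  · rcases eq_or_ne j i with rfl | hj
    · simpa [h.equity_eq_zero hi] using hlx j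
    · simpa [hj] using h.equity_le j

theorem payment_eq_of_isGreatest (hx : Monotone x) (hy : Monotone y)
    (h : IsGreatest (admissibleSet x y l κ) (a, p, V)) : p = l ⊓ (y (p, V) + a * l) := by
  have hadm : IsAdmissible x y l κ a p V := h.1
  have hle : p ≤ l ⊓ (y (p, V) + a * l) := le_inf hadm.payment_mem.2 hadm.payment_le
  have hmono : (p, V) ≤ (l ⊓ (y (p, V) + a * l), V) := Prod.mk_le_mk.2 ⟨hle, le_rfl⟩
  have himproved : IsAdmissible x y l κ a (l ⊓ (y (p, V) + a * l)) V :=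
    { hadm with
      payment_mem := ⟨hadm.payment_mem.1.trans hle, inf_le_left⟩
      payment_le := inf_le_right.trans (add_le_add_left (hy hmono) _)
      liability_le := hadm.liability_le.trans (hx hmono)
      equity_le := hadm.equity_le.trans (sub_le_sub_right (hx hmono) _) }
  exact le_antisymm hle (h.2 (mem_admissibleSet.2 himproved)).2.1

theorem equity_eq_of_isGreatest (hx : Monotone x) (hy : Monotone y)
    (h : IsGreatest (admissibleSet x y l κ) (a, p, V)) : V = κ * a ⊓ (x (p, V) - a * l) := by
  have hadm : IsAdmissible x y l κ a p V := h.1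
  have hle : V ≤ κ * a ⊓ (x (p, V) - a * l) := le_inf hadm.equity_le_cap hadm.equity_le
  have hmono : (p, V) ≤ (p, κ * a ⊓ (x (p, V) - a * l)) := Prod.mk_le_mk.2 ⟨le_rfl, hle⟩
  have himproved : IsAdmissible x y l κ a p (κ * a ⊓ (x (p, V) - a * l)) :=
    { hadm with
      equity_nonneg := hadm.equity_nonneg.trans hle
      payment_le := hadm.payment_le.trans (add_le_add_left (hy hmono) _)
      liability_le := hadm.liability_le.trans (hx hmono)
      equity_le := inf_le_right.trans (sub_le_sub_right (hx hmono) _)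
      equity_le_cap := inf_le_left }
  exact le_antisymm hle (h.2 (mem_admissibleSet.2 himproved)).2.2

theorem recovery_lt_of_isGreatest (hyx : ∀ q, 0 ≤ q → y q ≤ x q) (hκ : 0 ≤ κ)
    (h : IsGreatest (admissibleSet x y l κ) (a, p, V)) {i : ι} (hi : a i = 0) :
    y (p, V) i < l i := by
  classical
  by_contra! hly
  have himproved : IsAdmissible x y l κ (Function.update a i 1) p V :=
    update_pattern_one hyx hκ h.1 hi hly
  have hle : Function.update a i 1 i ≤ a i := (h.2 (mem_admissibleSet.2 himproved)).1 i
  rw [Function.update_self, hi] at hle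
  exact hle.not_gt zero_lt_one

end IsAdmissible

variable [IsStrictOrderedRing R]

theorem supClosed_admissibleSet (hx : Monotone x) (hy : Monotone y) (hκ : 0 ≤ κ) :
    SupClosed (admissibleSet x y l κ) :=
  fun _ h _ h' => IsAdmissible.sup hx hy hκ h h'

theorem IsEquityBound.value_sub_le (hκ : IsEquityBound x l κ) (hx : Monotone x)
    (h : IsAdmissible x y l κ a p V) : x (p, V) - l ≤ κ := by
  set W := (x (l, V) - l)⁺
  have hVW : V ≤ W := h.equity_le_posPart hx
  have hWW : W ≤ (x (l, W) - l)⁺ :=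
    posPart_mono (sub_le_sub_right (hx (Prod.mk_le_mk.2 ⟨le_rfl, hVW⟩)) l)
  calc
    x (p, V) - l ≤ x (l, V) - l :=
      sub_le_sub_right (hx (Prod.mk_le_mk.2 ⟨h.payment_mem.2, le_rfl⟩)) l
    _ ≤ W := le_posPart _
    _ ≤ κ := hκ W (posPart_nonneg _) hWW

theorem isClearing_of_isGreatest (hx : Monotone x) (hy : Monotone y)
    (hy_nonneg : ∀ q, 0 ≤ q → 0 ≤ y q) (hyx : ∀ q, 0 ≤ q → y q ≤ x q)
    (hκ : IsEquityBound x l κ) (h : IsGreatest (admissibleSet x y l κ) (a, p, V)) :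
    IsClearing x y l p V := by
  have hadm : IsAdmissible x y l κ a p V := h.1
  have hq : 0 ≤ (p, V) := ⟨hadm.payment_mem.1, hadm.equity_nonneg⟩
  have hp : ∀ i, p i = min (l i) (y (p, V) i + a i * l i) :=
    congrFun (IsAdmissible.payment_eq_of_isGreatest hx hy h)
  have hV : ∀ i, V i = min (κ i * a i) (x (p, V) i - a i * l i) :=
    congrFun (IsAdmissible.equity_eq_of_isGreatest hx hy h)
  have hdefault : ∀ i, a i = 0 → y (p, V) i < l i ∧ p i = y (p, V) i ∧ V i = 0 := by
    intro i hi
    have hlt := IsAdmissible.recovery_lt_of_isGreatest hyx hκ.nonneg h hi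
    exact ⟨hlt, by simpa [hi, hlt.le] using hp i, hadm.equity_eq_zero hi⟩
  have hsolvent : ∀ i, a i = 1 → p i = l i ∧ l i ≤ x (p, V) i ∧ V i = x (p, V) i - l i := by
    intro i hi
    have hyi : 0 ≤ y (p, V) i := hy_nonneg _ hq i
    have hcap : x (p, V) i - l i ≤ κ i := hκ.value_sub_le hx hadm i
    exact ⟨by simpa [hi, hyi] using hp i, by simpa [hi] using hadm.liability_le i,
      by simpa [hi, hcap] using hV i⟩
  refine ⟨hadm.payment_mem, hadm.equity_nonneg, fun i => ?_, fun i => ?_, fun i => ?_⟩ <;>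
    rcases hadm.binary i with hi | hi
  · exact (hdefault i hi).2.1.trans_le (hyx _ hq i)
  · exact (hsolvent i hi).1.trans_le (hsolvent i hi).2.1
  · exact Or.inr (hdefault i hi).2.1
  · exact Or.inl (hsolvent i hi).1
  · obtain ⟨hlt, hpi, hVi⟩ := hdefault i hi
    exact ⟨fun hpl => absurd (hpi.symm.trans hpl) hlt.ne, fun _ => hVi⟩
  · obtain ⟨hpi, -, hVi⟩ := hsolvent i hi
    exact ⟨fun _ => by rw [hVi, hpi], fun hpl => absurd hpi hpl⟩

namespace IsClearing

theorem isAdmissible (hy_nonneg : ∀ q, 0 ≤ q → 0 ≤ y q) (h : IsClearing x y l p V)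
    (hVκ : V ≤ κ) : IsAdmissible x y l κ (solvencyPattern l p) p V := by
  have hsolvent : ∀ i, p i = l i → solvencyPattern l p i = 1 := fun i hi => if_pos hi
  have hdefault : ∀ i, p i ≠ l i → solvencyPattern l p i = 0 := fun i hi => if_neg hi
  refine ⟨fun i => ?_, h.payment_mem, h.equity_nonneg, fun i => ?_, fun i => ?_, fun i => ?_,
    fun i => ?_⟩ <;> rcases eq_or_ne (p i) (l i) with hi | hi
  · exact Or.inr (hsolvent i hi)
  · exact Or.inl (hdefault i hi)
  · simpa [hsolvent i hi, hi] using hy_nonneg (p, V) ⟨h.payment_mem.1, h.equity_nonneg⟩ i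
  · simpa [hdefault i hi] using ((h.absolute_priority i).resolve_left hi).le
  · simpa [hsolvent i hi, hi] using h.limited_liability i
  · simpa [hdefault i hi] using (h.payment_mem.1 i).trans (h.limited_liability i)
  · simpa [hsolvent i hi, hi] using ((h.equity_eq i).1 hi).le
  · simpa [hdefault i hi, (h.equity_eq i).2 hi] using
      (h.payment_mem.1 i).trans (h.limited_liability i)
  · simpa [hsolvent i hi] using hVκ i
  · simpa [hdefault i hi] using ((h.equity_eq i).2 hi).le

theorem equity_le_of_isEquityBound (hx : Monotone x) (hy_nonneg : ∀ q, 0 ≤ q → 0 ≤ y q)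
    (hκ : IsEquityBound x l κ) (h : IsClearing x y l p V) : V ≤ κ :=
  hκ V h.equity_nonneg ((h.isAdmissible hy_nonneg le_rfl).equity_le_posPart hx)

end IsClearing

theorem isGreatest_isClearing_of_isMaxOn {β : Type*} [Preorder β]
    {f : (ι → R) × (ι → R) × (ι → R) → β} (hx : Monotone x) (hy : Monotone y)
    (hy_nonneg : ∀ q, 0 ≤ q → 0 ≤ y q) (hyx : ∀ q, 0 ≤ q → y q ≤ x q)
    (hκ : IsEquityBound x l κ) (hf : StrictMonoOn f (admissibleSet x y l κ))
    (hadm : IsAdmissible x y l κ a p V) (hmax : IsMaxOn f (admissibleSet x y l κ) (a, p, V)) :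
    IsGreatest {q | IsClearing x y l q.1 q.2} (p, V) := by
  have hgreatest : IsGreatest (admissibleSet x y l κ) (a, p, V) :=
    isGreatest_of_supClosed_of_isMaxOn (supClosed_admissibleSet hx hy hκ.nonneg) hf hadm hmax
  refine ⟨isClearing_of_isGreatest hx hy hy_nonneg hyx hκ hgreatest, ?_⟩
  rintro ⟨p', V'⟩ (hclear : IsClearing x y l p' V')
  have hcap : V' ≤ κ := hclear.equity_le_of_isEquityBound hx hy_nonneg hκ
  exact (hgreatest.2 (mem_admissibleSet.2 (hclear.isAdmissible hy_nonneg hcap))).2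

end Clearing

section LinearNetwork

variable {ι R : Type*} [Fintype ι] [CommRing R] [LinearOrder R] [IsStrictOrderedRing R]

/-- The total value `x(p, V) = e + Π'p + Θ'V` of the institutions of a network with external
assets `e`, liability matrix `P` (the paper's `Π`) and cross-holding matrix `Th` (`Θ`). -/
def totalValue (e : ι → R) (P Th : Matrix ι ι R) (q : (ι → R) × (ι → R)) : ι → R :=
  e + Pᵀ *ᵥ q.1 + Thᵀ *ᵥ q.2

/-- The value `y(p, V) = αe + βΠ'p + γΘ'V` recovered in default, after the losses described by the
recovery rates `α`, `β`, `γ`. -/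
def recoveryValue (e : ι → R) (P Th : Matrix ι ι R) (α β γ : R) (q : (ι → R) × (ι → R)) : ι → R :=
  α • e + β • (Pᵀ *ᵥ q.1) + γ • (Thᵀ *ᵥ q.2)

variable {e l κ : ι → R} {P Th : Matrix ι ι R} {α β γ : R}

theorem monotone_totalValue (hP : ∀ i j, 0 ≤ P i j) (hTh : ∀ i j, 0 ≤ Th i j) :
    Monotone (totalValue e P Th) := fun _ _ hq =>
  add_le_add (add_le_add le_rfl (monotone_mulVec_of_nonneg (fun i j => hP j i) hq.1))
    (monotone_mulVec_of_nonneg (fun i j => hTh j i) hq.2)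

theorem monotone_recoveryValue (hP : ∀ i j, 0 ≤ P i j) (hTh : ∀ i j, 0 ≤ Th i j) (hβ : 0 ≤ β)
    (hγ : 0 ≤ γ) : Monotone (recoveryValue e P Th α β γ) := fun _ _ hq =>
  add_le_add
    (add_le_add le_rfl
      (smul_le_smul_of_nonneg_left (monotone_mulVec_of_nonneg (fun i j => hP j i) hq.1) hβ))
    (smul_le_smul_of_nonneg_left (monotone_mulVec_of_nonneg (fun i j => hTh j i) hq.2) hγ)

theorem recoveryValue_nonneg (he : 0 ≤ e) (hP : ∀ i j, 0 ≤ P i j) (hTh : ∀ i j, 0 ≤ Th i j)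
    (hα : 0 ≤ α) (hβ : 0 ≤ β) (hγ : 0 ≤ γ) {q : (ι → R) × (ι → R)} (hq : 0 ≤ q) :
    0 ≤ recoveryValue e P Th α β γ q :=
  add_nonneg
    (add_nonneg (smul_nonneg hα he)
      (smul_nonneg hβ (mulVec_nonneg_of_nonneg (fun i j => hP j i) hq.1)))
    (smul_nonneg hγ (mulVec_nonneg_of_nonneg (fun i j => hTh j i) hq.2))

theorem recoveryValue_le_totalValue (he : 0 ≤ e) (hP : ∀ i j, 0 ≤ P i j)
    (hTh : ∀ i j, 0 ≤ Th i j) (hα : α ≤ 1) (hβ : β ≤ 1) (hγ : γ ≤ 1)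
    {q : (ι → R) × (ι → R)} (hq : 0 ≤ q) :
    recoveryValue e P Th α β γ q ≤ totalValue e P Th q :=
  add_le_add
    (add_le_add (smul_le_of_le_one_left he hα)
      (smul_le_of_le_one_left (mulVec_nonneg_of_nonneg (fun i j => hP j i) hq.1) hβ))
    (smul_le_of_le_one_left (mulVec_nonneg_of_nonneg (fun i j => hTh j i) hq.2) hγ)

theorem isEquityBound_totalValue [DecidableEq ι] (hTh : ∀ i j, 0 ≤ Th i j)
    (hInv : IsUnit (1 - Thᵀ)) (hInvNonneg : ∀ i j, 0 ≤ (1 - Thᵀ)⁻¹ i j)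
    (hκ : (1 - Thᵀ)⁻¹ *ᵥ (e + Pᵀ *ᵥ l - l)⁺ ≤ κ) : IsEquityBound (totalValue e P Th) l κ := by
  intro W hW hWle
  have hThW : 0 ≤ Thᵀ *ᵥ W := mulVec_nonneg_of_nonneg (fun i j => hTh j i) hW
  have hsplit : (totalValue e P Th (l, W) - l)⁺ ≤ (e + Pᵀ *ᵥ l - l)⁺ + Thᵀ *ᵥ W := by
    refine sup_le ?_ (add_nonneg (posPart_nonneg _) hThW)
    rw [totalValue, add_sub_right_comm]
    exact add_le_add_left (le_posPart _) _
  have hsub : (1 - Thᵀ) *ᵥ W ≤ (e + Pᵀ *ᵥ l - l)⁺ := by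
    rw [sub_mulVec, one_mulVec, sub_le_iff_le_add]
    exact hWle.trans hsplit
  exact (le_inv_mulVec_of_mulVec_le hInv hInvNonneg hsub).trans hκ

theorem stmt11_general [DecidableEq ι] {T : Type*} [Preorder T]
    (he : 0 ≤ e) (hP : ∀ i j, 0 ≤ P i j) (hTh : ∀ i j, 0 ≤ Th i j)
    (hα : α ∈ Set.Icc 0 1) (hβ : β ∈ Set.Icc 0 1) (hγ : γ ∈ Set.Icc 0 1)
    (hInv : IsUnit (1 - Thᵀ)) (hInvNonneg : ∀ i j, 0 ≤ (1 - Thᵀ)⁻¹ i j)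
    (hκ : (1 - Thᵀ)⁻¹ *ᵥ (e + Pᵀ *ᵥ l - l)⁺ ≤ κ)
    {f : (ι → R) × (ι → R) × (ι → R) → T} (hf : StrictMono f) {a p V : ι → R}
    (hadm : IsAdmissible (totalValue e P Th) (recoveryValue e P Th α β γ) l κ a p V)
    (hmax : IsMaxOn f (admissibleSet (totalValue e P Th) (recoveryValue e P Th α β γ) l κ)
      (a, p, V)) :
    IsGreatest {q | IsClearing (totalValue e P Th) (recoveryValue e P Th α β γ) l q.1 q.2}
      (p, V) :=
  isGreatest_isClearing_of_isMaxOn (monotone_totalValue hP hTh)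
    (monotone_recoveryValue hP hTh hβ.1 hγ.1)
    (fun _ => recoveryValue_nonneg he hP hTh hα.1 hβ.1 hγ.1)
    (fun _ => recoveryValue_le_totalValue he hP hTh hα.2 hβ.2 hγ.2)
    (isEquityBound_totalValue hTh hInv hInvNonneg hκ) (hf.strictMonoOn _) hadm hmax

end LinearNetwork

/-- If `(â,p̂,V̂)` is optimal for problem P1, then `(p̂,V̂)` is a clearing
pair, and it is maximal: for every clearing pair `(p,V)` with `V ≤ κ·1` one has
`p ≤ p̂` and `V ≤ V̂`. -/
theorem stmt11 (N : ℕ) (hN : 1 < N)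
    (e l : Fin N → ℝ) (he : 0 ≤ e) (hl : 0 ≤ l)
    (P Th : Matrix (Fin N) (Fin N) ℝ)
    (hP : ∀ i j, 0 ≤ P i j) (hProw : ∀ i, ∑ j, P i j = 1)
    (hTh : ∀ i j, 0 ≤ Th i j) (hThrow : ∀ i, ∑ j, Th i j ≤ 1)
    (α β γ : ℝ) (hα : α ∈ Set.Icc (0:ℝ) 1) (hβ : β ∈ Set.Icc (0:ℝ) 1)
    (hγ : γ ∈ Set.Icc (0:ℝ) 1)
    (hInv : IsUnit (1 - Th.transpose))
    (hInvNonneg : ∀ i j, 0 ≤ (1 - Th.transpose)⁻¹ i j)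
    (K : Fin N → ℝ)
    (hK : K = (1 - Th.transpose)⁻¹.mulVec
      (fun i => max (e i + P.transpose.mulVec l i - l i) 0))
    (κ : ℝ) (hκ : κ = ⨆ i, K i)
    (f₁ f₂ f₃ : Fin N → ℝ)
    (hf₁ : ∀ i, 0 < f₁ i) (hf₂ : ∀ i, 0 < f₂ i) (hf₃ : ∀ i, 0 < f₃ i)
    (f : (Fin N → ℝ) → (Fin N → ℝ) → (Fin N → ℝ) → ℝ)
    (hf : f = fun a p V => ∑ i, (f₁ i * a i + f₂ i * p i + f₃ i * V i))
    (Clearing : (Fin N → ℝ) → (Fin N → ℝ) → Prop)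
    (hClearing : ∀ p V : Fin N → ℝ, Clearing p V ↔
      (p ∈ Set.Icc (0 : Fin N → ℝ) l ∧ 0 ≤ V ∧
      (∀ i, p i ≤ e i + P.transpose.mulVec p i + Th.transpose.mulVec V i) ∧
      (∀ i, p i = l i ∨
        p i = α * e i + β * P.transpose.mulVec p i + γ * Th.transpose.mulVec V i) ∧
      (∀ i, (p i = l i →
          V i = e i + P.transpose.mulVec p i + Th.transpose.mulVec V i - p i) ∧
        (p i ≠ l i → V i = 0))))
    (Adm1 : (Fin N → ℝ) → (Fin N → ℝ) → (Fin N → ℝ) → Prop)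
    (hAdm1 : ∀ a p V : Fin N → ℝ, Adm1 a p V ↔
      ((∀ i, a i = 0 ∨ a i = 1) ∧ p ∈ Set.Icc (0 : Fin N → ℝ) l ∧ 0 ≤ V ∧
      (∀ i, p i ≤ α * e i + β * P.transpose.mulVec p i + γ * Th.transpose.mulVec V i
        + a i * l i) ∧
      (∀ i, a i * l i ≤ e i + P.transpose.mulVec p i + Th.transpose.mulVec V i) ∧
      (∀ i, V i ≤ e i + P.transpose.mulVec p i + Th.transpose.mulVec V i - a i * l i) ∧
      (∀ i, V i ≤ κ * a i)))
    (ahat phat Vhat : Fin N → ℝ)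
    (hAdm : Adm1 ahat phat Vhat)
    (hOpt : ∀ a p V : Fin N → ℝ, Adm1 a p V → f a p V ≤ f ahat phat Vhat) :
    Clearing phat Vhat ∧
      ∀ p V : Fin N → ℝ, Clearing p V → (∀ i, V i ≤ κ) → p ≤ phat ∧ V ≤ Vhat := by
  have hC : ∀ p V, Clearing p V ↔
      IsClearing (totalValue e P Th) (recoveryValue e P Th α β γ) l p V := fun p V =>
    (hClearing p V).trans ⟨fun ⟨h₁, h₂, h₃, h₄, h₅⟩ => ⟨h₁, h₂, h₃, h₄, h₅⟩,
      fun ⟨h₁, h₂, h₃, h₄, h₅⟩ => ⟨h₁, h₂, h₃, h₄, h₅⟩⟩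
  have hA : ∀ a p V, Adm1 a p V ↔
      IsAdmissible (totalValue e P Th) (recoveryValue e P Th α β γ) l (fun _ => κ) a p V :=
    fun a p V => (hAdm1 a p V).trans
      ⟨fun ⟨h₁, h₂, h₃, h₄, h₅, h₆, h₇⟩ => ⟨h₁, h₂, h₃, h₄, h₅, h₆, h₇⟩,
        fun ⟨h₁, h₂, h₃, h₄, h₅, h₆, h₇⟩ => ⟨h₁, h₂, h₃, h₄, h₅, h₆, h₇⟩⟩
  have hKκ : K ≤ fun _ => κ := fun i => hκ ▸ le_ciSup (Set.finite_range K).bddAbove i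
  subst hK hf
  have hgreatest := stmt11_general he hP hTh hα hβ hγ hInv hInvNonneg hKκ
    (strictMono_sum_mul_add_mul_add_mul hf₁ hf₂ hf₃) ((hA _ _ _).1 hAdm)
    fun t ht => hOpt _ _ _ ((hA _ _ _).2 ht)
  exact ⟨(hC _ _).2 hgreatest.1, fun p V h _ =>
    mem_upperBounds.1 hgreatest.2 (p, V) ((hC p V).1 h)⟩
end
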